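/- Let K be any field, and let G_40 ⊆ S_8 be the subgroup of order 192 generated by (1,5)(2,6), σ_1 = (1,2)(3,4)(5,6)(7,8), φ̃_1 = (2,3,4)(6,7,8), and (1,5)(3,4)(7,8). Then the fixed field K(x_1,…,x_8)^{G_40} is K-rational. -/

import Mathlib

noncomputable section

/-- The rational function field `K(x_i : i ∈ I)` over `K`, realized as the fraction field
of the multivariate polynomial ring. -/
abbrev RFF (K : Type) [Field K] (I : Type) := FractionRing (MvPolynomial I K)

/-- The image of the variable `x_i` in the rational function field `K(x_i : i ∈ I)`. -/
noncomputable def Xvar (K : Type) [Field K] (I : Type) (i : I) : RFF K I :=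
  algebraMap (MvPolynomial I K) (RFF K I) (MvPolynomial.X i)

/-- Permutations of the variables as `K`-algebra automorphisms of the polynomial ring. -/
def renameHom (K : Type) [Field K] (I : Type) :
    Equiv.Perm I →* (MvPolynomial I K ≃ₐ[K] MvPolynomial I K) where
  toFun σ := MvPolynomial.renameEquiv K σ
  map_one' := MvPolynomial.renameEquiv_refl K
  map_mul' σ τ := (MvPolynomial.renameEquiv_trans K τ σ).symm

/-- The action of permutations of the variables on `K(x_i : i ∈ I)` by `K`-automorphisms,
determined by `σ(x_i) = x_{σ(i)}`. -/
noncomputable def permHom (K : Type) [Field K] (I : Type) :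
    Equiv.Perm I →* (RFF K I ≃ₐ[K] RFF K I) :=
  (IsFractionRing.fieldEquivOfAlgEquivHom K (RFF K I)).comp (renameHom K I)

/-- The fixed field `K(x_i : i ∈ I)^G` of a group `G` of permutations of the variables. -/
noncomputable def fixedSub (K : Type) [Field K] (I : Type) (G : Subgroup (Equiv.Perm I)) :
    IntermediateField K (RFF K I) :=
  IntermediateField.fixedField (G.map (permHom K I))

/-- An extension `L/K` is `K`-rational if it is purely transcendental over `K`, i.e. generated
by finitely many algebraically independent elements. -/
def IsRatExt (K : Type) [Field K] (L : Type*) [Field L] [Algebra K L] : Prop :=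
  ∃ (n : ℕ) (t : Fin n → L), AlgebraicIndependent K t ∧
    IntermediateField.adjoin K (Set.range t) = ⊤

/-! Group the variables into the four pairs `x_{i,1} = x_i`, `x_{i,-1} = x_{i+4}`. The generators
of `G₄₀` are *balanced*: they permute the pairs, and swap the members of an even number of pairs
exactly if the permutation of the pairs is even. Eight invariant elements over whose subfield
`K(x)` has degree at most `192 ≤ |G₄₀|` generate the fixed field, and comparing transcendence
degrees they are algebraically independent; so it suffices to exhibit such elements.

Away from characteristic two, let `u_i` and `v_i` be the sums and differences of the pairs, which
are permuted, respectively permuted up to sign. Then `c = ∑ v_i²`, the quartic `f = ∏ (X - u_i)` and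
the monic cubic `g = c⁻¹ ∑ v_i² ∏_{j ≠ i} (X - u_j)` are invariant, and so is the square root
`y = ∏ v_i · ∏_{i < j} (u_j - u_i) / c²` of `Res(f, g)`, by balancedness. Write `f = q g + y h` with
`deg h ≤ 2`. The generators are `c`, the coefficients of `g` and `h`, and the constant term of the
monic linear polynomial `q`. They determine `y`, hence `f`, because
`y² = Res(f, g) = ± Res(g, y h) = ± y³ Res(g, h)`. The `u_i` then generate an extension of degree
at most `4!`, and adjoining `v_1, v_2, v_3` contributes at most `2³`; `v_4` is recovered from `y`.

In characteristic two, `v_i` is replaced by `z_i = x_{i,1} / u_i`, to which one is added when the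
pair is swapped, and `y` by the sum of the `z_i` and of an Artin–Schreier root attached to the
discriminant of `f`. The sum of the `z_i² + z_i` is then determined by this element and the `u_i`,
so the generators are this element, the coefficients of `f`, and all coefficients but the leading
one of the polynomial `∑ (z_i² + z_i) ∏_{j ≠ i} (X - u_j)`.
-/

section RationalFunctionField

open IntermediateField

variable {K : Type} [Field K] {I : Type}

theorem permHom_Xvar (σ : Equiv.Perm I) (i : I) :
    permHom K I σ (Xvar K I i) = Xvar K I (σ i) := by
  simp [permHom, Xvar, renameHom, IsFractionRing.fieldEquivOfAlgEquivHom_apply]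

theorem Xvar_injective : Function.Injective (Xvar K I) :=
  (IsFractionRing.injective (MvPolynomial I K) (RFF K I)).comp MvPolynomial.X_injective

theorem permHom_injective : Function.Injective (permHom K I) := fun σ τ h ↦
  Equiv.ext fun i ↦ Xvar_injective (K := K) <| by rw [← permHom_Xvar, h, permHom_Xvar]

theorem adjoin_range_Xvar : adjoin K (Set.range (Xvar K I)) = ⊤ := by
  have hpoly (p : MvPolynomial I K) :
      algebraMap _ (RFF K I) p ∈ adjoin K (Set.range (Xvar K I)) := by
    induction p using MvPolynomial.induction_on with
    | C a => exact IntermediateField.algebraMap_mem _ a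
    | add p q hp hq => exact map_add (algebraMap _ (RFF K I)) p q ▸ add_mem hp hq
    | mul_X p i hp =>
      exact map_mul (algebraMap _ (RFF K I)) p _ ▸ mul_mem hp (subset_adjoin _ _ ⟨i, rfl⟩)
  refine eq_top_iff.mpr fun z _ ↦ ?_
  obtain ⟨p, q, -, rfl⟩ := IsFractionRing.div_surjective (A := MvPolynomial I K) z
  exact div_mem (hpoly p) (hpoly q)

theorem isTranscendenceBasis_Xvar : IsTranscendenceBasis K (Xvar K I) :=
  have : Algebra.IsAlgebraic (MvPolynomial I K) (RFF K I) :=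
    IsLocalization.isAlgebraic _ (nonZeroDivisors (MvPolynomial I K))
  (IsTranscendenceBasis.mvPolynomial I K).algebraMap_comp

theorem mem_fixedSub {G : Subgroup (Equiv.Perm I)} {x : RFF K I} :
    x ∈ fixedSub K I G ↔ ∀ σ ∈ G, permHom K I σ x = x := by
  simp only [fixedSub, mem_fixedField_iff, Subgroup.mem_map, forall_exists_index, and_imp,
    forall_apply_eq_imp_iff₂]

theorem mem_fixedSub_closure {S : Set (Equiv.Perm I)} {x : RFF K I}
    (h : ∀ σ ∈ S, permHom K I σ x = x) : x ∈ fixedSub K I (Subgroup.closure S) := by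
  refine mem_fixedSub.mpr fun σ hσ ↦ ?_
  have hle : Subgroup.closure S ≤
      (MulAction.stabilizer (RFF K I ≃ₐ[K] RFF K I) x).comap (permHom K I) :=
    (Subgroup.closure_le _).mpr h
  exact hle hσ

theorem finrank_fixedSub [Finite I] (G : Subgroup (Equiv.Perm I)) :
    Module.finrank (fixedSub K I G) (RFF K I) = Nat.card G := by
  let e := (G.equivMapOfInjective (permHom K I) permHom_injective).toEquiv
  have : Finite (G.map (permHom K I)) := .of_equiv G e
  have := Fintype.ofFinite (G.map (permHom K I))
  rw [Nat.card_congr e, Nat.card_eq_fintype_card]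
  exact FixedPoints.finrank_eq_card (G.map (permHom K I)) (RFF K I)

open IntermediateField.algebraAdjoinAdjoin in
theorem isRatExt_fixedSub {J : Type} [Finite I] [Finite J] {G : Subgroup (Equiv.Perm I)}
    {t : J → RFF K I} (hcard : Nat.card J ≤ Nat.card I) (ht : ∀ j, t j ∈ fixedSub K I G)
    (hrank : Module.rank (adjoin K (Set.range t)) (RFF K I) ≤ (Nat.card G : Cardinal)) :
    IsRatExt K (fixedSub K I G) := by
  have : FiniteDimensional (adjoin K (Set.range t)) (RFF K I) :=
    Module.rank_lt_aleph0_iff.mp (hrank.trans_lt Cardinal.natCast_lt_aleph0)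
  have hfixed : adjoin K (Set.range t) = fixedSub K I G :=
    eq_of_le_of_finrank_le' (adjoin_le_iff.mpr (Set.range_subset_iff.mpr ht))
      (finrank_fixedSub (K := K) G ▸ Module.finrank_le_of_rank_le hrank)
  have : Algebra.IsAlgebraic (Algebra.adjoin K (Set.range t)) (RFF K I) :=
    have := IsLocalization.isAlgebraic (adjoin K (Set.range t))
      (nonZeroDivisors (Algebra.adjoin K (Set.range t)))
    Algebra.IsAlgebraic.trans _ (adjoin K (Set.range t)) _
  have hle : Cardinal.mk J ≤ Algebra.trdeg K (RFF K I) := by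
    rw [← isTranscendenceBasis_Xvar.cardinalMk_eq_trdeg, ← Nat.cast_card, ← Nat.cast_card]
    exact_mod_cast hcard
  have hindep : AlgebraicIndependent K t :=
    (Algebra.IsAlgebraic.isTranscendenceBasis_of_le_trdeg_of_finite K t hle).1
  obtain ⟨n, ⟨e⟩⟩ := Finite.exists_equiv_fin J
  refine ⟨n, fun k ↦ ⟨t (e.symm k), ht _⟩, ?_, ?_⟩
  · exact .of_comp (fixedSub K I G).val (hindep.comp e.symm e.symm.injective)
  · apply lift_injective
    rw [lift_adjoin, lift_top, ← Set.range_comp]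
    exact (congrArg _ (e.symm.surjective.range_comp t)).trans hfixed

end RationalFunctionField

section DegreeBound

open IntermediateField Polynomial
open scoped Nat

variable {F L : Type*} [Field F] [Field L] [Algebra F L]

theorem rank_adjoin_range_le_factorial {ι : Type*} [Fintype ι] {u : ι → L}
    (hu : Function.Injective u) {f : F[X]}
    (hf : f.map (algebraMap F L) = Lagrange.nodal Finset.univ u) :
    Module.rank F (adjoin F (Set.range u)) ≤ ((Fintype.card ι)! : Cardinal) := by
  have hsplits : (f.map (algebraMap F L)).Splits := by
    rw [hf, Lagrange.nodal_eq]
    exact Splits.prod fun i _ ↦ Splits.X_sub_C _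
  have hsep : f.Separable := by
    rw [← separable_map (algebraMap F L), hf, Lagrange.nodal_eq]
    exact separable_prod_X_sub_C_iff.mpr hu
  have hf0 : f ≠ 0 := hsep.ne_zero
  have hroots : f.rootSet L = Set.range u := by
    ext x
    rw [mem_rootSet_of_ne hf0, ← eval_map_algebraMap, hf, Lagrange.eval_nodal,
      Finset.prod_eq_zero_iff]
    simp [sub_eq_zero, eq_comm]
  rw [← hroots]
  have := adjoin_rootSet_isSplittingField hsplits
  have := IsSplittingField.finiteDimensional (adjoin F (f.rootSet L)) f
  have : Fact (f.map (algebraMap F L)).Splits := ⟨hsplits⟩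
  rw [← Module.finrank_eq_rank, Nat.cast_le,
    (IsSplittingField.algEquiv (adjoin F (f.rootSet L)) f).toLinearEquiv.finrank_eq,
    ← Gal.card_of_separable hsep]
  calc Nat.card f.Gal ≤ Nat.card (Equiv.Perm (f.rootSet L)) :=
        Nat.card_le_card_of_injective _ (Gal.galActionHom_injective f L)
    _ = (Fintype.card ι)! := by
        rw [hroots, Nat.card_perm, Nat.card_range_of_injective hu, Nat.card_eq_fintype_card]

theorem rank_adjoin_range_le_pow {ι : Type*} [Fintype ι] {w : ι → L} {d : ℕ}
    (hw : ∀ i, ∃ p : F[X], p.Monic ∧ p.natDegree = d ∧ aeval (w i) p = 0) :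
    Module.rank F (adjoin F (Set.range w)) ≤ (d ^ Fintype.card ι : ℕ) := by
  classical
  suffices h : ∀ s : Finset ι, Module.rank F (adjoin F (w '' s)) ≤ (d ^ s.card : ℕ) by
    rw [← Set.image_univ, ← Finset.coe_univ]
    exact h Finset.univ
  intro s
  induction s using Finset.induction_on with
  | empty =>
    rw [Finset.coe_empty, Set.image_empty, adjoin_empty, IntermediateField.rank_bot]
    simp
  | insert i s hi ih =>
    obtain ⟨p, hp, hdeg, hroot⟩ := hw i
    have hsimple : Module.rank F (adjoin F {w i}) ≤ d := by
      have := adjoin.finiteDimensional (⟨p, hp, hroot⟩ : IsIntegral F (w i))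
      rw [← Module.finrank_eq_rank, adjoin.finrank ⟨p, hp, hroot⟩, ← hdeg]
      exact_mod_cast natDegree_le_of_dvd (minpoly.dvd F _ hroot) hp.ne_zero
    rw [Finset.coe_insert, Set.image_insert_eq, Set.insert_eq, adjoin_union,
      Finset.card_insert_of_notMem hi, pow_succ', Nat.cast_mul]
    exact (rank_sup_le _ _).trans (mul_le_mul' hsimple ih)

theorem rank_le_factorial_mul_two_pow {ι κ : Type*} [Fintype ι] [Fintype κ]
    {u : ι → L} (hu : Function.Injective u)
    (hf : Lagrange.nodal Finset.univ u ∈ lifts (algebraMap F L)) {w : κ → L}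
    (hw : ∀ k, ∃ a ∈ adjoin F (Set.range u), ∃ b ∈ adjoin F (Set.range u),
      w k ^ 2 + a * w k + b = 0)
    (htop : adjoin F (Set.range u ∪ Set.range w) = ⊤) :
    Module.rank F L ≤ ((Fintype.card ι)! * 2 ^ Fintype.card κ : ℕ) := by
  obtain ⟨f, hf⟩ := (mem_lifts _).mp hf
  have hquad (k : κ) : ∃ p : (adjoin F (Set.range u))[X],
      p.Monic ∧ p.natDegree = 2 ∧ aeval (w k) p = 0 := by
    obtain ⟨a, ha, b, hb, h⟩ := hw k
    exact ⟨C 1 * X ^ 2 + C ⟨a, ha⟩ * X + C ⟨b, hb⟩, leadingCoeff_quadratic one_ne_zero,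
      natDegree_quadratic one_ne_zero, by simpa using h⟩
  rw [← rank_mul_rank F (adjoin F (Set.range u)) L, Nat.cast_mul]
  refine mul_le_mul' (rank_adjoin_range_le_factorial hu hf) ?_
  have := rank_adjoin_range_le_pow hquad
  rw [← adjoin_adjoin_left, restrictScalars_eq_top_iff] at htop
  rwa [htop, IntermediateField.rank_top'] at this

theorem adjoin_union_range_castSucc_eq_top {S : Set L} {n : ℕ} {v : Fin (n + 1) → L}
    (htop : adjoin F (S ∪ Set.range v) = ⊤)
    (hlast : v (Fin.last n) ∈ adjoin F (S ∪ Set.range (v ∘ Fin.castSucc))) :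
    adjoin F (S ∪ Set.range (v ∘ Fin.castSucc)) = ⊤ := by
  rw [eq_top_iff, ← htop, adjoin_le_iff, Set.union_subset_iff, Set.range_subset_iff]
  refine ⟨fun s hs ↦ subset_adjoin _ _ (.inl hs), fun i ↦ ?_⟩
  induction i using Fin.lastCases with
  | last => exact hlast
  | cast i => exact subset_adjoin _ _ (.inr ⟨i, rfl⟩)

end DegreeBound

section PolynomialLifts

open Polynomial

theorem mem_lifts_of_natDegree_le {R S : Type*} [Semiring R] [Semiring S] {f : R →+* S} {p : S[X]}
    {n : ℕ} (hp : p.natDegree ≤ n) (hn : p.coeff n ∈ Set.range f)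
    (h : ∀ i : Fin n, p.coeff i ∈ Set.range f) : p ∈ lifts f := by
  refine (lifts_iff_coeff_lifts p).mpr fun k ↦ ?_
  obtain hk | rfl | hk := lt_trichotomy k n
  · exact h ⟨k, hk⟩
  · exact hn
  · exact ⟨0, by rw [map_zero, coeff_eq_zero_of_natDegree_lt (hp.trans_lt hk)]⟩

end PolynomialLifts

section LagrangeNumerator

open Polynomial Finset

variable {R ι : Type*} [CommRing R] [Fintype ι]

theorem map_nodal_univ {φ : R →+* R} {σ : Equiv.Perm ι} {u : ι → R}
    (hu : ∀ i, φ (u i) = u (σ i)) :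
    (Lagrange.nodal univ u).map φ = Lagrange.nodal univ u := by
  simp only [Lagrange.nodal_eq, Polynomial.map_prod, Polynomial.map_sub, map_X, map_C, hu]
  exact Equiv.prod_comp σ fun i ↦ X - C (u i)

variable [DecidableEq ι]

/-- The numerator of the partial fraction expansion `∑ i, w i / (X - u i)` over the common
denominator `∏ i, (X - u i)`. Its coefficients encode the values `w i` symmetrically. -/
def lagrangeNumerator (u w : ι → R) : R[X] :=
  ∑ i, C (w i) * Lagrange.nodal (univ.erase i) u

theorem eval_lagrangeNumerator (u w : ι → R) (i : ι) :
    (lagrangeNumerator u w).eval (u i) = w i * ∏ j ∈ univ.erase i, (u i - u j) := by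
  rw [lagrangeNumerator, eval_finsetSum, sum_eq_single i]
  · rw [eval_mul, eval_C, Lagrange.eval_nodal]
  · intro j _ hji
    rw [eval_mul, Lagrange.eval_nodal_at_node (mem_erase.mpr ⟨hji.symm, mem_univ i⟩), mul_zero]
  · simp

theorem natDegree_lagrangeNumerator_le (u w : ι → R) :
    (lagrangeNumerator u w).natDegree ≤ Fintype.card ι - 1 := by
  nontriviality R
  refine natDegree_sum_le_of_forall_le _ _ fun i _ ↦ (natDegree_C_mul_le _ _).trans ?_
  rw [Lagrange.natDegree_nodal, card_erase_of_mem (mem_univ i), card_univ]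

theorem coeff_lagrangeNumerator_card_sub_one (u w : ι → R) :
    (lagrangeNumerator u w).coeff (Fintype.card ι - 1) = ∑ i, w i := by
  nontriviality R
  rw [lagrangeNumerator, finsetSum_coeff]
  refine sum_congr rfl fun i _ ↦ ?_
  have hdeg : (Lagrange.nodal (univ.erase i) u).natDegree = Fintype.card ι - 1 := by
    rw [Lagrange.natDegree_nodal, card_erase_of_mem (mem_univ i), card_univ]
  rw [coeff_C_mul, ← hdeg, Lagrange.nodal_monic.coeff_natDegree, mul_one]

theorem map_lagrangeNumerator {φ : R →+* R} {σ : Equiv.Perm ι} {u w : ι → R}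
    (hu : ∀ i, φ (u i) = u (σ i)) (hw : ∀ i, φ (w i) = w (σ i)) :
    (lagrangeNumerator u w).map φ = lagrangeNumerator u w := by
  have hnodal (i : ι) : (Lagrange.nodal (univ.erase i) u).map φ =
      Lagrange.nodal (univ.erase (σ i)) u := by
    simp only [Lagrange.nodal_eq, Polynomial.map_prod, Polynomial.map_sub, map_X, map_C, hu]
    exact prod_equiv σ (by simp) (by simp)
  simp only [lagrangeNumerator, Polynomial.map_sum, Polynomial.map_mul, map_C, hw, hnodal]
  exact Equiv.sum_comp σ fun i ↦ C (w i) * Lagrange.nodal (univ.erase i) u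

theorem mem_of_lagrangeNumerator_mem_lifts {F L : Type*} [Field F] [Field L] [Algebra F L]
    {E : IntermediateField F L} {u w : ι → L} (hu : Function.Injective u) (huE : ∀ i, u i ∈ E)
    (h : lagrangeNumerator u w ∈ lifts (algebraMap E L)) (i : ι) : w i ∈ E := by
  have hne : ∏ j ∈ univ.erase i, (u i - u j) ≠ 0 :=
    prod_ne_zero_iff.mpr fun j hj ↦ sub_ne_zero.mpr (hu.ne (ne_of_mem_erase hj).symm)
  have hprod : ∏ j ∈ univ.erase i, (u i - u j) ∈ E :=
    prod_mem fun j _ ↦ sub_mem (huE i) (huE j)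
  obtain ⟨p, hp⟩ := (mem_lifts _).mp h
  have heval : (lagrangeNumerator u w).eval (u i) = p.eval (⟨u i, huE i⟩ : E) :=
    hp ▸ eval_map_apply (f := algebraMap E L) (p := p) ⟨u i, huE i⟩
  rw [eval_lagrangeNumerator] at heval
  exact eq_div_of_mul_eq hne heval ▸ div_mem (Subtype.prop _) hprod

end LagrangeNumerator

section Vandermonde

open Finset

variable {R : Type*} [CommRing R] {n : ℕ} {u : Fin n → R}

theorem det_vandermonde_mem {S : Type*} [SetLike S R] [SubringClass S R] {s : S}
    (hu : ∀ i, u i ∈ s) : (Matrix.vandermonde u).det ∈ s := by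
  rw [Matrix.det_vandermonde]
  exact prod_mem fun i _ ↦ prod_mem fun j _ ↦ sub_mem (hu j) (hu i)

theorem map_det_vandermonde {φ : R →+* R} {σ : Equiv.Perm (Fin n)} (hu : ∀ i, φ (u i) = u (σ i)) :
    φ (Matrix.vandermonde u).det = (Equiv.Perm.sign σ : ℤ) * (Matrix.vandermonde u).det := by
  rw [RingHom.map_det, ← Matrix.det_permute]
  congr 1
  ext i j
  simp [Matrix.vandermonde_apply, hu]

theorem prod_erase_sub_eq_det_vandermonde_sq (u : Fin n → R) :
    ∏ i, ∏ j ∈ univ.erase i, (u i - u j) =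
      (-1) ^ n.choose 2 * (Matrix.vandermonde u).det ^ 2 := by
  have hcard : ∑ i : Fin n, #(Ioi i) = n.choose 2 := by
    simp_rw [Fin.card_Ioi]
    rw [Fin.sum_univ_eq_sum_range (fun i ↦ n - 1 - i), sum_range_reflect (fun i ↦ i), sum_range_id,
      Nat.choose_two_right]
  have hpair (i : Fin n) : ∏ j ∈ Ioi i, (u i - u j) * (u j - u i) =
      (-1) ^ #(Ioi i) * (∏ j ∈ Ioi i, (u j - u i)) ^ 2 := by
    rw [← prod_pow, ← prod_const, ← prod_mul_distrib]
    exact prod_congr rfl fun j _ ↦ by ring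
  calc ∏ i, ∏ j ∈ univ.erase i, (u i - u j)
      = ∏ i, ∏ j ∈ Ioi i, (u i - u j) * (u j - u i) := by
        simp_rw [← compl_singleton]
        rw [← prod_prod_Ioi_mul_eq_prod_prod_off_diag fun j i ↦ u i - u j]
    _ = _ := by
        rw [prod_congr rfl fun i _ ↦ hpair i, prod_mul_distrib, prod_pow_eq_pow_sum, hcard,
          prod_pow, Matrix.det_vandermonde]

end Vandermonde

section Resultant

open Polynomial Finset

variable {R : Type*} [CommRing R]

theorem resultant_modByMonic {f g : R[X]} (hg : g.Monic) (hdeg : g.natDegree ≤ f.natDegree) :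
    resultant g (f %ₘ g) g.natDegree f.natDegree = resultant g f := by
  nontriviality R
  have hquot : (f /ₘ g).natDegree + g.natDegree ≤ f.natDegree := by
    rw [natDegree_divByMonic f hg, Nat.sub_add_cancel hdeg]
  rw [← resultant_add_mul_right _ _ _ _ _ hquot le_rfl, modByMonic_add_div]

theorem resultant_nodal [Nontrivial R] {ι : Type*} (s : Finset ι) (u : ι → R) (g : R[X]) :
    resultant (Lagrange.nodal s u) g = ∏ i ∈ s, g.eval (u i) := by
  rw [Lagrange.nodal_eq, resultant_prod_left _ _ _ _ (by simp) le_rfl]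
  simp

theorem mem_range_of_resultant_eq_pow {F L : Type*} [Field F] [Field L] [Algebra F L]
    {f g : L[X]} {y : L} {k : ℕ} (hg : g.Monic) (hk : g.natDegree = k + 1)
    (hdeg : g.natDegree ≤ f.natDegree) (hy : y ≠ 0) (hres : resultant f g = y ^ k)
    (hgF : g ∈ lifts (algebraMap F L)) (hrF : C y⁻¹ * (f %ₘ g) ∈ lifts (algebraMap F L)) :
    y ∈ Set.range (algebraMap F L) := by
  -- The resultant has degree `k + 1` in the remainder, so a factor `y` contributes `y ^ (k + 1)`.
  obtain ⟨p, hp⟩ := (mem_lifts _).mp hgF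
  obtain ⟨q, hq⟩ := (mem_lifts _).mp hrF
  have hmod : f %ₘ g = C y * q.map (algebraMap F L) := by
    rw [hq, ← mul_assoc, ← C_mul, mul_inv_cancel₀ hy, C_1, one_mul]
  obtain ⟨ρ, hρ⟩ : resultant g (q.map (algebraMap F L)) g.natDegree f.natDegree ∈
      Set.range (algebraMap F L) := by
    rw [← hp, resultant_map_map]
    exact ⟨_, rfl⟩
  have hpow : resultant f g =
      y ^ k * (y * algebraMap F L ((-1) ^ (f.natDegree * g.natDegree) * ρ)) := by
    rw [resultant_comm, ← resultant_modByMonic hg hdeg, hmod, resultant_C_mul_right, map_mul, hρ,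
      map_pow, map_neg, map_one, hk]
    ring
  rw [hres, left_eq_mul₀ (pow_ne_zero k hy)] at hpow
  refine ⟨((-1) ^ (f.natDegree * g.natDegree) * ρ)⁻¹, ?_⟩
  rw [map_inv₀]
  exact (eq_inv_of_mul_eq_one_left hpow).symm

end Resultant

section Kummer

open Polynomial Finset

variable {L : Type*} [Field L]

/-- The monic cubic with value proportional to `v i ^ 2 * ∏ j ≠ i, (u i - u j)` at `u i`
(when `∑ i, v i ^ 2 ≠ 0`). -/
def kummerCubic (u v : Fin 4 → L) : L[X] :=
  C (∑ i, v i ^ 2)⁻¹ * lagrangeNumerator u fun i ↦ v i ^ 2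

/-- A square root of the resultant of `∏ i, (X - u i)` and `kummerCubic u v`. -/
def kummerRoot (u v : Fin 4 → L) : L :=
  (∏ i, v i) * (Matrix.vandermonde u).det / (∑ i, v i ^ 2) ^ 2

/-- The remainder of `∏ i, (X - u i)` modulo `kummerCubic u v`, divided by `kummerRoot u v`: the
division is what makes `kummerRoot u v` a rational function of the coefficients. -/
def kummerRemainder (u v : Fin 4 → L) : L[X] :=
  C (kummerRoot u v)⁻¹ * (Lagrange.nodal univ u %ₘ kummerCubic u v)

/-- Generators of the fixed field in characteristic other than two: the coefficients of
`kummerCubic u v` and of `kummerRemainder u v`, the sum by which the former was normalized, and the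
constant term of the quotient of `∏ i, (X - u i)` by the former. -/
def kummerGenerators (u v : Fin 4 → L) : Fin 3 ⊕ Fin 3 ⊕ Fin 2 → L :=
  Sum.elim (fun i ↦ (kummerCubic u v).coeff i) <|
    Sum.elim (fun i ↦ (kummerRemainder u v).coeff i)
      ![∑ i, v i ^ 2, (Lagrange.nodal univ u /ₘ kummerCubic u v).coeff 0]

variable {u v : Fin 4 → L}

theorem natDegree_kummerCubic_le : (kummerCubic u v).natDegree ≤ 3 :=
  (natDegree_C_mul_le _ _).trans (natDegree_lagrangeNumerator_le u _)

theorem coeff_kummerCubic_three (hc : ∑ i, v i ^ 2 ≠ 0) : (kummerCubic u v).coeff 3 = 1 := by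
  rw [kummerCubic, coeff_C_mul,
    show 3 = Fintype.card (Fin 4) - 1 from rfl, coeff_lagrangeNumerator_card_sub_one]
  exact inv_mul_cancel₀ hc

theorem kummerCubic_monic (hc : ∑ i, v i ^ 2 ≠ 0) : (kummerCubic u v).Monic :=
  monic_of_natDegree_le_of_coeff_eq_one 3 natDegree_kummerCubic_le (coeff_kummerCubic_three hc)

theorem natDegree_kummerCubic (hc : ∑ i, v i ^ 2 ≠ 0) : (kummerCubic u v).natDegree = 3 :=
  natDegree_eq_of_le_of_coeff_ne_zero natDegree_kummerCubic_le
    (coeff_kummerCubic_three hc ▸ one_ne_zero)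

theorem degree_kummerCubic_le_degree_nodal (hc : ∑ i, v i ^ 2 ≠ 0) :
    (kummerCubic u v).degree ≤ (Lagrange.nodal univ u).degree := by
  rw [degree_eq_natDegree (kummerCubic_monic hc).ne_zero, natDegree_kummerCubic hc,
    Lagrange.degree_nodal]
  exact Nat.cast_le.mpr (Nat.le_succ 3)

theorem natDegree_kummerRemainder_lt (hc : ∑ i, v i ^ 2 ≠ 0) :
    (kummerRemainder u v).natDegree < 3 := by
  have hne : kummerCubic u v ≠ 1 := fun h ↦ by
    simpa [h] using natDegree_kummerCubic (u := u) hc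
  exact (natDegree_C_mul_le _ _).trans_lt (natDegree_kummerCubic (u := u) hc ▸
    natDegree_modByMonic_lt _ (kummerCubic_monic hc) hne)

theorem resultant_nodal_kummerCubic :
    resultant (Lagrange.nodal univ u) (kummerCubic u v) = kummerRoot u v ^ 2 := by
  simp only [resultant_nodal, kummerCubic, eval_mul, eval_C, eval_lagrangeNumerator,
    prod_mul_distrib, prod_erase_sub_eq_det_vandermonde_sq, prod_pow, prod_const, card_univ,
    Fintype.card_fin, kummerRoot]
  rw [show Nat.choose 4 2 = 6 from rfl]
  ring

theorem kummerRoot_ne_zero (hu : Function.Injective u) (hv : ∀ i, v i ≠ 0)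
    (hc : ∑ i, v i ^ 2 ≠ 0) : kummerRoot u v ≠ 0 :=
  div_ne_zero (mul_ne_zero (prod_ne_zero_iff.mpr fun i _ ↦ hv i)
    (Matrix.det_vandermonde_ne_zero_iff.mpr hu)) (pow_ne_zero 2 hc)

section Degree

variable {F : Type*} [Field F] [Algebra F L]

theorem kummerCubic_mem_lifts (hc : ∑ i, v i ^ 2 ≠ 0)
    (hF : ∀ j, kummerGenerators u v j ∈ Set.range (algebraMap F L)) :
    kummerCubic u v ∈ lifts (algebraMap F L) :=
  mem_lifts_of_natDegree_le natDegree_kummerCubic_le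
    ⟨1, by rw [map_one, coeff_kummerCubic_three hc]⟩ fun i ↦ hF (.inl i)

theorem kummerRemainder_mem_lifts (hc : ∑ i, v i ^ 2 ≠ 0)
    (hF : ∀ j, kummerGenerators u v j ∈ Set.range (algebraMap F L)) :
    kummerRemainder u v ∈ lifts (algebraMap F L) :=
  mem_lifts_of_natDegree_le (natDegree_kummerRemainder_lt hc).le
    ⟨0, by rw [map_zero, coeff_eq_zero_of_natDegree_lt (natDegree_kummerRemainder_lt hc)]⟩
    fun i ↦ hF (.inr (.inl i))

theorem kummerCubic_quotient_mem_lifts (hc : ∑ i, v i ^ 2 ≠ 0)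
    (hF : ∀ j, kummerGenerators u v j ∈ Set.range (algebraMap F L)) :
    Lagrange.nodal univ u /ₘ kummerCubic u v ∈ lifts (algebraMap F L) := by
  have hg := kummerCubic_monic (u := u) hc
  have hdeg : (Lagrange.nodal univ u /ₘ kummerCubic u v).natDegree = 1 := by
    simp [natDegree_divByMonic _ hg, natDegree_kummerCubic hc]
  have hlead : (Lagrange.nodal univ u /ₘ kummerCubic u v).leadingCoeff = 1 := by
    rw [leadingCoeff_divByMonic_of_monic hg (degree_kummerCubic_le_degree_nodal hc),
      Lagrange.nodal_monic.leadingCoeff]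
  refine mem_lifts_of_natDegree_le hdeg.le ⟨1, ?_⟩ fun i ↦ ?_
  · rw [map_one, ← hlead, leadingCoeff, hdeg]
  · rw [Subsingleton.elim i 0]
    exact hF (.inr (.inr 1))

theorem kummerRoot_mem_range (hu : Function.Injective u) (hv : ∀ i, v i ≠ 0)
    (hc : ∑ i, v i ^ 2 ≠ 0) (hF : ∀ j, kummerGenerators u v j ∈ Set.range (algebraMap F L)) :
    kummerRoot u v ∈ Set.range (algebraMap F L) := by
  have hdeg : (kummerCubic u v).natDegree ≤ (Lagrange.nodal univ u).natDegree := by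
    simp [natDegree_kummerCubic hc]
  exact mem_range_of_resultant_eq_pow (kummerCubic_monic hc) (natDegree_kummerCubic hc) hdeg
    (kummerRoot_ne_zero hu hv hc) resultant_nodal_kummerCubic (kummerCubic_mem_lifts hc hF)
    (kummerRemainder_mem_lifts hc hF)

theorem nodal_mem_lifts_of_kummerGenerators (hu : Function.Injective u) (hv : ∀ i, v i ≠ 0)
    (hc : ∑ i, v i ^ 2 ≠ 0) (hF : ∀ j, kummerGenerators u v j ∈ Set.range (algebraMap F L)) :
    Lagrange.nodal univ u ∈ lifts (algebraMap F L) := by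
  have hmod : Lagrange.nodal univ u %ₘ kummerCubic u v ∈ lifts (algebraMap F L) := by
    have h := mul_mem (C'_mem_lifts (kummerRoot_mem_range hu hv hc hF))
      (kummerRemainder_mem_lifts hc hF)
    rwa [kummerRemainder, ← mul_assoc, ← C_mul, mul_inv_cancel₀ (kummerRoot_ne_zero hu hv hc), C_1,
      one_mul] at h
  rw [← modByMonic_add_div (Lagrange.nodal univ u) (kummerCubic u v)]
  exact add_mem hmod (mul_mem (kummerCubic_mem_lifts hc hF)
    (kummerCubic_quotient_mem_lifts hc hF))

theorem sq_mem_adjoin_of_kummerGenerators (hu : Function.Injective u)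
    (hc : ∑ i, v i ^ 2 ≠ 0) (hF : ∀ j, kummerGenerators u v j ∈ Set.range (algebraMap F L))
    (i : Fin 4) : v i ^ 2 ∈ IntermediateField.adjoin F (Set.range u) := by
  have hlifts : lagrangeNumerator u (fun i ↦ v i ^ 2) ∈ lifts (algebraMap F L) := by
    have hsum : ∑ i, v i ^ 2 ∈ Set.range (algebraMap F L) := hF (.inr (.inr 0))
    have h := mul_mem (C'_mem_lifts hsum) (kummerCubic_mem_lifts hc hF)
    rwa [kummerCubic, ← mul_assoc, ← C_mul, mul_inv_cancel₀ hc, C_1, one_mul] at h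
  set E := IntermediateField.adjoin F (Set.range u)
  have huE (j : Fin 4) : u j ∈ E := IntermediateField.subset_adjoin _ _ ⟨j, rfl⟩
  obtain ⟨p, hp⟩ := (mem_lifts _).mp hlifts
  refine mem_of_lagrangeNumerator_mem_lifts (w := fun i ↦ v i ^ 2) hu huE
    ((mem_lifts _).mpr ⟨p.map (algebraMap F E), ?_⟩) i
  rw [Polynomial.map_map, ← IsScalarTower.algebraMap_eq, hp]

theorem last_mem_adjoin_of_kummerRoot_mem_range (hu : Function.Injective u) (hv : ∀ i, v i ≠ 0)
    (hc : ∑ i, v i ^ 2 ≠ 0) (hcF : ∑ i, v i ^ 2 ∈ Set.range (algebraMap F L))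
    (hy : kummerRoot u v ∈ Set.range (algebraMap F L)) :
    v (Fin.last 3) ∈ IntermediateField.adjoin F (Set.range u ∪ Set.range (v ∘ Fin.castSucc)) := by
  set E := IntermediateField.adjoin F (Set.range u ∪ Set.range (v ∘ Fin.castSucc))
  have hF {x : L} : x ∈ Set.range (algebraMap F L) → x ∈ E := fun ⟨a, ha⟩ ↦ ha ▸ E.algebraMap_mem a
  have hdet : (Matrix.vandermonde u).det ∈ E :=
    det_vandermonde_mem fun i ↦ IntermediateField.subset_adjoin _ _ (.inl ⟨i, rfl⟩)
  have hprod : ∏ i : Fin 3, v i.castSucc ∈ E :=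
    prod_mem fun i _ ↦ IntermediateField.subset_adjoin _ _ (.inr ⟨i, rfl⟩)
  have hdet0 := Matrix.det_vandermonde_ne_zero_iff.mpr hu
  have hprod0 : ∏ i : Fin 3, v i.castSucc ≠ 0 := prod_ne_zero_iff.mpr fun i _ ↦ hv _
  have hlast : v (Fin.last 3) = kummerRoot u v * (∑ i, v i ^ 2) ^ 2 /
      ((∏ i : Fin 3, v i.castSucc) * (Matrix.vandermonde u).det) := by
    rw [kummerRoot, div_mul_cancel₀ _ (pow_ne_zero 2 hc), Fin.prod_univ_castSucc v]
    field_simp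
  exact hlast ▸ div_mem (mul_mem (hF hy) (pow_mem (hF hcF) 2)) (mul_mem hprod hdet)

theorem rank_le_of_kummerGenerators (hu : Function.Injective u) (hv : ∀ i, v i ≠ 0)
    (hc : ∑ i, v i ^ 2 ≠ 0) (hF : ∀ j, kummerGenerators u v j ∈ Set.range (algebraMap F L))
    (htop : IntermediateField.adjoin F (Set.range u ∪ Set.range v) = ⊤) :
    Module.rank F L ≤ (192 : ℕ) := by
  refine rank_le_factorial_mul_two_pow hu
    (nodal_mem_lifts_of_kummerGenerators hu hv hc hF) (w := v ∘ Fin.castSucc) (fun k ↦ ?_)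
    (adjoin_union_range_castSucc_eq_top htop ?_)
  · exact ⟨0, zero_mem _, -v k.castSucc ^ 2,
      neg_mem (sq_mem_adjoin_of_kummerGenerators hu hc hF _), by simp⟩
  · exact last_mem_adjoin_of_kummerRoot_mem_range hu hv hc (hF (.inr (.inr 0)))
      (kummerRoot_mem_range hu hv hc hF)

end Degree

section Invariance

variable {φ : L →+* L} {σ : Equiv.Perm (Fin 4)} {ε : Fin 4 → ℤˣ}

theorem map_sq_of_map_eq_sign_mul (hv : ∀ i, φ (v i) = (ε i : ℤ) * v (σ i)) (i : Fin 4) :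
    φ (v i ^ 2) = v (σ i) ^ 2 := by
  rw [map_pow, hv, mul_pow, ← Int.cast_pow, ← Units.val_pow_eq_pow_val, Int.units_sq, Units.val_one,
    Int.cast_one, one_mul]

theorem map_sum_sq (hv : ∀ i, φ (v i) = (ε i : ℤ) * v (σ i)) :
    φ (∑ i, v i ^ 2) = ∑ i, v i ^ 2 := by
  rw [map_sum, sum_congr rfl fun i _ ↦ map_sq_of_map_eq_sign_mul hv i]
  exact Equiv.sum_comp σ fun i ↦ v i ^ 2

theorem map_kummerCubic (hu : ∀ i, φ (u i) = u (σ i))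
    (hv : ∀ i, φ (v i) = (ε i : ℤ) * v (σ i)) : (kummerCubic u v).map φ = kummerCubic u v := by
  rw [kummerCubic, Polynomial.map_mul, map_C, map_inv₀, map_sum_sq hv,
    map_lagrangeNumerator hu (map_sq_of_map_eq_sign_mul hv)]

theorem map_kummerRoot (hu : ∀ i, φ (u i) = u (σ i)) (hv : ∀ i, φ (v i) = (ε i : ℤ) * v (σ i))
    (hε : ∏ i, ε i = Equiv.Perm.sign σ) : φ (kummerRoot u v) = kummerRoot u v := by
  have hprod : φ (∏ i, v i) = (Equiv.Perm.sign σ : ℤ) * ∏ i, v i := by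
    rw [map_prod, prod_congr rfl fun i _ ↦ hv i, prod_mul_distrib, Equiv.prod_comp σ v, ← hε]
    simp
  have hsq : ((Equiv.Perm.sign σ : ℤ) : L) * (Equiv.Perm.sign σ : ℤ) = 1 := by
    rw [← Int.cast_mul, Int.units_coe_mul_self, Int.cast_one]
  rw [kummerRoot, map_div₀, map_pow, map_mul, hprod, map_det_vandermonde hu, map_sum_sq hv,
    mul_mul_mul_comm, hsq, one_mul]

theorem map_kummerGenerators (hu : ∀ i, φ (u i) = u (σ i))
    (hv : ∀ i, φ (v i) = (ε i : ℤ) * v (σ i)) (hε : ∏ i, ε i = Equiv.Perm.sign σ)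
    (hc : ∑ i, v i ^ 2 ≠ 0) (j : Fin 3 ⊕ Fin 3 ⊕ Fin 2) :
    φ (kummerGenerators u v j) = kummerGenerators u v j := by
  have hg := kummerCubic_monic (u := u) hc
  have hr : (kummerRemainder u v).map φ = kummerRemainder u v := by
    rw [kummerRemainder, Polynomial.map_mul, map_C, map_inv₀, map_kummerRoot hu hv hε,
      map_modByMonic _ hg, map_nodal_univ hu, map_kummerCubic hu hv]
  have hq : (Lagrange.nodal univ u /ₘ kummerCubic u v).map φ =
      Lagrange.nodal univ u /ₘ kummerCubic u v := by
    rw [map_divByMonic _ hg, map_nodal_univ hu, map_kummerCubic hu hv]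
  obtain i | i | i := j
  · exact (coeff_map φ i).symm.trans (congrArg (coeff · i) (map_kummerCubic hu hv))
  · exact (coeff_map φ i).symm.trans (congrArg (coeff · i) hr)
  · fin_cases i
    · exact map_sum_sq hv
    · exact (coeff_map φ 0).symm.trans (congrArg (coeff · 0) hq)

end Invariance

end Kummer

section SignBit

variable {R : Type*} [CommRing R]

/-- The additive character `±1 ↦ 0, 1` of the sign group, in a ring of characteristic two. -/
def signBit (ε : ℤˣ) : R := if ε = 1 then 0 else 1

theorem signBit_mul [CharP R 2] (ε δ : ℤˣ) : (signBit (ε * δ) : R) = signBit ε + signBit δ := by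
  obtain rfl | rfl := Int.units_eq_one_or ε <;> obtain rfl | rfl := Int.units_eq_one_or δ <;>
    simp [signBit, CharTwo.add_self_eq_zero]

theorem signBit_prod [CharP R 2] {ι : Type*} (s : Finset ι) (ε : ι → ℤˣ) :
    (signBit (∏ i ∈ s, ε i) : R) = ∑ i ∈ s, signBit (ε i) := by
  classical
  induction s using Finset.induction_on with
  | empty => simp [signBit]
  | insert i s hi ih => rw [Finset.prod_insert hi, Finset.sum_insert hi, signBit_mul, ih]

theorem signBit_sq_add_self [CharP R 2] (ε : ℤˣ) : (signBit ε : R) ^ 2 + signBit ε = 0 := by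
  obtain rfl | rfl := Int.units_eq_one_or ε <;> simp [signBit, CharTwo.add_self_eq_zero]

end SignBit

section HalfVandermonde

open Equiv Equiv.Perm

variable {R : Type*} [CommRing R] {n : ℕ} {u : Fin n → R}

/-- The part of the Vandermonde determinant coming from odd permutations (without signs). In
characteristic two its quotient by the determinant plays the role of the square root of the
discriminant: an odd permutation of the `u i` adds one to it. -/
def halfVandermonde (u : Fin n → R) : R :=
  ∑ σ : Equiv.Perm (Fin n), signBit (sign σ) * ∏ i, u (σ i) ^ (i : ℕ)

theorem det_vandermonde_eq_sum_of_charTwo [CharP R 2] (u : Fin n → R) :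
    (Matrix.vandermonde u).det = ∑ σ : Equiv.Perm (Fin n), ∏ i, u (σ i) ^ (i : ℕ) := by
  rw [Matrix.det_apply]
  refine Finset.sum_congr rfl fun σ _ ↦ ?_
  obtain h | h := Int.units_eq_one_or (sign σ) <;>
    simp [h, Matrix.vandermonde_apply, CharTwo.neg_eq]

theorem map_halfVandermonde [CharP R 2] {φ : R →+* R} {τ : Equiv.Perm (Fin n)}
    (hu : ∀ i, φ (u i) = u (τ i)) :
    φ (halfVandermonde u) =
      halfVandermonde u + signBit (sign τ) * (Matrix.vandermonde u).det := by
  have hsign (σ : Equiv.Perm (Fin n)) :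
      (signBit (sign σ) : R) = signBit (sign (τ * σ)) + signBit (sign τ) := by
    rw [Equiv.Perm.sign_mul, signBit_mul, add_right_comm, CharTwo.add_self_eq_zero, zero_add]
  have hφ (σ : Equiv.Perm (Fin n)) : φ (signBit (sign σ)) = signBit (sign σ) := by
    simp [signBit, apply_ite φ]
  calc φ (halfVandermonde u)
      = ∑ σ, signBit (sign σ) * ∏ i : Fin n, u ((τ * σ) i) ^ (i : ℕ) := by
        simp only [halfVandermonde, map_sum, map_mul, map_prod, map_pow, hu, hφ, Perm.mul_apply]
    _ = ∑ σ, (signBit (sign (τ * σ)) + signBit (sign τ)) * ∏ i : Fin n, u ((τ * σ) i) ^ (i : ℕ) :=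
        Finset.sum_congr rfl fun σ _ ↦ by rw [hsign σ]
    _ = ∑ σ, (signBit (sign σ) + signBit (sign τ)) * ∏ i, u (σ i) ^ (i : ℕ) :=
        Equiv.sum_comp (Equiv.mulLeft τ) fun σ ↦
          (signBit (sign σ) + signBit (sign τ)) * ∏ i, u (σ i) ^ (i : ℕ)
    _ = _ := by
        simp only [add_mul, Finset.sum_add_distrib, ← Finset.mul_sum,
          det_vandermonde_eq_sum_of_charTwo, halfVandermonde]

theorem halfVandermonde_mem {S : Type*} [SetLike S R] [SubringClass S R] {s : S}
    (hu : ∀ i, u i ∈ s) : halfVandermonde u ∈ s := by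
  refine sum_mem fun σ _ ↦ mul_mem ?_ (prod_mem fun i _ ↦ pow_mem (hu _) _)
  rw [signBit]
  split_ifs
  exacts [zero_mem s, one_mem s]

end HalfVandermonde

section ArtinSchreier

open Polynomial Finset

variable {L : Type*} [Field L] {n : ℕ}

/-- The invariant combining the Artin–Schreier elements `z i` with the Artin–Schreier element of
the discriminant of the `u i`: a balanced permutation changes both summands by the same sign bit. -/
def artinSchreierSum (u z : Fin (n + 1) → L) : L :=
  ∑ i, z i + halfVandermonde u / (Matrix.vandermonde u).det

/-- Generators of the fixed field in characteristic two: the coefficients of `∏ i, (X - u i)`, all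
coefficients but the leading one of the Lagrange numerator with values `z i ^ 2 + z i`, and
`artinSchreierSum u z`. The omitted coefficient is determined by the other generators and the `u i`
through `sum_sq_add_self_eq`. -/
def artinSchreierGenerators (u z : Fin (n + 1) → L) : Fin (n + 1) ⊕ Fin n ⊕ Unit → L :=
  Sum.elim (fun i ↦ (Lagrange.nodal univ u).coeff i) <|
    Sum.elim (fun i ↦ (lagrangeNumerator u fun i ↦ z i ^ 2 + z i).coeff i)
      fun _ ↦ artinSchreierSum u z

variable {u z : Fin (n + 1) → L}

section Degree

variable {F : Type*} [Field F] [Algebra F L]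

theorem nodal_mem_lifts_of_artinSchreierGenerators
    (hF : ∀ j, artinSchreierGenerators u z j ∈ Set.range (algebraMap F L)) :
    Lagrange.nodal univ u ∈ lifts (algebraMap F L) := by
  have hdeg : (Lagrange.nodal univ u).natDegree = n + 1 := by simp
  have hlead : (Lagrange.nodal univ u).coeff (n + 1) = 1 := by
    simpa only [hdeg] using (Lagrange.nodal_monic (s := univ) (v := u)).coeff_natDegree
  exact mem_lifts_of_natDegree_le hdeg.le ⟨1, by rw [map_one, hlead]⟩ fun i ↦ hF (.inl i)

variable [CharP L 2]

theorem sum_sq_add_self_eq :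
    ∑ i, (z i ^ 2 + z i) = artinSchreierSum u z ^ 2 + artinSchreierSum u z +
      ((halfVandermonde u / (Matrix.vandermonde u).det) ^ 2 +
        halfVandermonde u / (Matrix.vandermonde u).det) := by
  rw [sum_add_distrib, ← CharTwo.sum_sq, artinSchreierSum, CharTwo.add_sq]
  set q := halfVandermonde u / (Matrix.vandermonde u).det
  linear_combination -CharTwo.add_self_eq_zero q - CharTwo.add_self_eq_zero (q ^ 2)

theorem sq_add_self_mem_adjoin_of_artinSchreierGenerators (hu : Function.Injective u)
    (hF : ∀ j, artinSchreierGenerators u z j ∈ Set.range (algebraMap F L)) (i : Fin (n + 1)) :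
    z i ^ 2 + z i ∈ IntermediateField.adjoin F (Set.range u) := by
  set E := IntermediateField.adjoin F (Set.range u)
  have huE (j) : u j ∈ E := IntermediateField.subset_adjoin _ _ ⟨j, rfl⟩
  have hFE {x : L} : x ∈ Set.range (algebraMap F L) → x ∈ E := fun ⟨a, ha⟩ ↦ ha ▸ E.algebraMap_mem a
  have hE {x : L} (hx : x ∈ E) : x ∈ Set.range (algebraMap E L) := ⟨⟨x, hx⟩, rfl⟩
  have hsum : ∑ i, (z i ^ 2 + z i) ∈ E := by
    have hq := div_mem (halfVandermonde_mem huE) (det_vandermonde_mem huE)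
    have hY := hFE (hF (.inr (.inr ())))
    rw [sum_sq_add_self_eq (u := u)]
    exact add_mem (add_mem (pow_mem hY 2) hY) (add_mem (pow_mem hq 2) hq)
  have hdeg := natDegree_lagrangeNumerator_le u fun i ↦ z i ^ 2 + z i
  have hlead := coeff_lagrangeNumerator_card_sub_one u fun i ↦ z i ^ 2 + z i
  rw [Fintype.card_fin, Nat.add_sub_cancel] at hdeg hlead
  exact mem_of_lagrangeNumerator_mem_lifts hu huE
    (mem_lifts_of_natDegree_le hdeg (hE (hlead ▸ hsum)) fun i ↦ hE (hFE (hF (.inr (.inl i))))) i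

theorem rank_le_of_artinSchreierGenerators (hu : Function.Injective u)
    (hF : ∀ j, artinSchreierGenerators u z j ∈ Set.range (algebraMap F L))
    (htop : IntermediateField.adjoin F (Set.range u ∪ Set.range z) = ⊤) :
    Module.rank F L ≤ ((n + 1).factorial * 2 ^ n : ℕ) := by
  have hrank := rank_le_factorial_mul_two_pow hu (nodal_mem_lifts_of_artinSchreierGenerators hF)
    (w := z ∘ Fin.castSucc)
    (fun k ↦ ⟨1, one_mem _, z k.castSucc ^ 2 + z k.castSucc,
      sq_add_self_mem_adjoin_of_artinSchreierGenerators hu hF _, by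
        simp [CharTwo.add_self_eq_zero]⟩)
    (adjoin_union_range_castSucc_eq_top htop ?_)
  · simpa only [Fintype.card_fin] using hrank
  · set E := IntermediateField.adjoin F (Set.range u ∪ Set.range (z ∘ Fin.castSucc))
    have huE (i) : u i ∈ E := IntermediateField.subset_adjoin _ _ (.inl ⟨i, rfl⟩)
    have hzE (i : Fin n) : z i.castSucc ∈ E := IntermediateField.subset_adjoin _ _ (.inr ⟨i, rfl⟩)
    obtain ⟨a, ha⟩ := hF (.inr (.inr ()))
    have hlast : z (Fin.last n) = algebraMap F L a -
        halfVandermonde u / (Matrix.vandermonde u).det - ∑ i : Fin n, z i.castSucc := by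
      rw [ha]
      simp only [artinSchreierGenerators, Sum.elim_inr, artinSchreierSum, Fin.sum_univ_castSucc]
      ring
    rw [hlast]
    exact sub_mem (sub_mem (E.algebraMap_mem a)
      (div_mem (halfVandermonde_mem huE) (det_vandermonde_mem huE))) (sum_mem fun i _ ↦ hzE i)

end Degree

section Invariance

variable [CharP L 2] {φ : L →+* L} {σ : Equiv.Perm (Fin (n + 1))} {ε : Fin (n + 1) → ℤˣ}

theorem map_artinSchreierSum (hinj : Function.Injective u) (hu : ∀ i, φ (u i) = u (σ i))
    (hz : ∀ i, φ (z i) = z (σ i) + signBit (ε i)) (hε : ∏ i, ε i = Equiv.Perm.sign σ) :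
    φ (artinSchreierSum u z) = artinSchreierSum u z := by
  have hdet : (Matrix.vandermonde u).det ≠ 0 := Matrix.det_vandermonde_ne_zero_iff.mpr hinj
  have hdetφ : φ (Matrix.vandermonde u).det = (Matrix.vandermonde u).det := by
    rw [map_det_vandermonde hu]
    obtain h | h := Int.units_eq_one_or (Equiv.Perm.sign σ) <;> simp [h, CharTwo.neg_eq]
  have hsum : φ (∑ i, z i) = ∑ i, z i + signBit (Equiv.Perm.sign σ) := by
    rw [map_sum, sum_congr rfl fun i _ ↦ hz i, sum_add_distrib, Equiv.sum_comp σ z, ← signBit_prod,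
      hε]
  rw [artinSchreierSum, map_add, hsum, map_div₀, map_halfVandermonde hu, hdetφ, add_div,
    mul_div_cancel_right₀ _ hdet]
  linear_combination CharTwo.add_self_eq_zero (signBit (Equiv.Perm.sign σ) : L)

theorem map_artinSchreierGenerators (hinj : Function.Injective u) (hu : ∀ i, φ (u i) = u (σ i))
    (hz : ∀ i, φ (z i) = z (σ i) + signBit (ε i)) (hε : ∏ i, ε i = Equiv.Perm.sign σ)
    (j : Fin (n + 1) ⊕ Fin n ⊕ Unit) :
    φ (artinSchreierGenerators u z j) = artinSchreierGenerators u z j := by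
  have hsq (i : Fin (n + 1)) : φ (z i ^ 2 + z i) = z (σ i) ^ 2 + z (σ i) := by
    rw [map_add, map_pow, hz, CharTwo.add_sq, add_add_add_comm, signBit_sq_add_self, add_zero]
  obtain i | i | _ := j
  · exact (coeff_map φ i).symm.trans (congrArg (coeff · i) (map_nodal_univ hu))
  · exact (coeff_map φ i).symm.trans (congrArg (coeff · i) (map_lagrangeNumerator hu hsq))
  · exact map_artinSchreierSum hinj hu hz hε

end Invariance

end ArtinSchreier

section SignedPairs

open IntermediateField

variable {L ι : Type*} [Field L]

/-- The sums of the pairs of variables `x (i, 1)`, `x (i, -1)`. -/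
def pairSum (x : ι × ℤˣ → L) (i : ι) : L := x (i, 1) + x (i, -1)

/-- The differences of the pairs of variables, which are negated when a pair is swapped. -/
def pairDiff (x : ι × ℤˣ → L) (i : ι) : L := x (i, 1) - x (i, -1)

/-- The fraction of the pair sum contributed by `x (i, 1)`. In characteristic two one is added to
it when the pair is swapped, so that it replaces the difference. -/
def pairRatio (x : ι × ℤˣ → L) (i : ι) : L := x (i, 1) / pairSum x i

variable {x : ι × ℤˣ → L}

section Invariance

variable {φ : L →+* L} {σ : Equiv.Perm ι} {ε : ι → ℤˣ}

theorem map_pairSum (hφ : ∀ i s, φ (x (i, s)) = x (σ i, ε i * s)) (i : ι) :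
    φ (pairSum x i) = pairSum x (σ i) := by
  obtain h | h := Int.units_eq_one_or (ε i) <;> simp [pairSum, hφ, h, add_comm]

theorem map_pairDiff (hφ : ∀ i s, φ (x (i, s)) = x (σ i, ε i * s)) (i : ι) :
    φ (pairDiff x i) = (ε i : ℤ) * pairDiff x (σ i) := by
  obtain h | h := Int.units_eq_one_or (ε i) <;> simp [pairDiff, hφ, h]

theorem map_pairRatio [CharP L 2] (hφ : ∀ i s, φ (x (i, s)) = x (σ i, ε i * s))
    (hx : ∀ i, pairSum x i ≠ 0) (i : ι) :
    φ (pairRatio x i) = pairRatio x (σ i) + signBit (ε i) := by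
  rw [pairRatio, map_div₀, map_pairSum hφ, hφ, mul_one, pairRatio, div_eq_iff (hx _), add_mul,
    div_mul_cancel₀ _ (hx _)]
  obtain h | h := Int.units_eq_one_or (ε i)
  · simp [h, signBit]
  · simp [h, signBit, pairSum, CharTwo.add_cancel_left]

end Invariance

section Generation

variable {F : Type*} [Field F] [Algebra F L]

theorem adjoin_eq_top_of_pair_mem {S : Set L} (hx : adjoin F (Set.range x) = ⊤)
    (h : ∀ i, x (i, 1) ∈ adjoin F S) (hsum : ∀ i, pairSum x i ∈ adjoin F S) :
    adjoin F S = ⊤ := by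
  rw [eq_top_iff, ← hx, adjoin_le_iff, Set.range_subset_iff]
  rintro ⟨i, s⟩
  obtain rfl | rfl := Int.units_eq_one_or s
  · exact h i
  · exact add_sub_cancel_left (x (i, 1)) (x (i, -1)) ▸ sub_mem (hsum i) (h i)

theorem adjoin_pairSum_union_pairDiff (h2 : (2 : L) ≠ 0) (hx : adjoin F (Set.range x) = ⊤) :
    adjoin F (Set.range (pairSum x) ∪ Set.range (pairDiff x)) = ⊤ := by
  have hsum (i) : pairSum x i ∈ adjoin F (Set.range (pairSum x) ∪ Set.range (pairDiff x)) :=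
    subset_adjoin _ _ (.inl ⟨i, rfl⟩)
  refine adjoin_eq_top_of_pair_mem hx (fun i ↦ ?_) hsum
  have hhalf : x (i, 1) = (pairSum x i + pairDiff x i) / 2 := by
    rw [eq_div_iff h2, pairSum, pairDiff]
    ring
  exact hhalf ▸ div_mem (add_mem (hsum i) (subset_adjoin _ _ (.inr ⟨i, rfl⟩))) (ofNat_mem _ 2)

theorem adjoin_pairSum_union_pairRatio (hx0 : ∀ i, pairSum x i ≠ 0)
    (hx : adjoin F (Set.range x) = ⊤) :
    adjoin F (Set.range (pairSum x) ∪ Set.range (pairRatio x)) = ⊤ := by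
  have hsum (i) : pairSum x i ∈ adjoin F (Set.range (pairSum x) ∪ Set.range (pairRatio x)) :=
    subset_adjoin _ _ (.inl ⟨i, rfl⟩)
  exact adjoin_eq_top_of_pair_mem hx (fun i ↦ div_mul_cancel₀ (x (i, 1)) (hx0 i) ▸
    mul_mem (subset_adjoin _ _ (.inr ⟨i, rfl⟩)) (hsum i)) hsum

end Generation

section Nondegeneracy

open MvPolynomial

variable {F : Type*} [Field F] [Algebra F L]

theorem pairSum_injective (hx : AlgebraicIndependent F x) : Function.Injective (pairSum x) := by
  classical
  intro i j h
  have hpoly : (X (i, 1) + X (i, -1) : MvPolynomial (ι × ℤˣ) F) = X (j, 1) + X (j, -1) :=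
    hx (by simpa [pairSum] using h)
  have := congrArg (eval (Pi.single (i, 1) 1)) hpoly
  by_contra hij
  simp [Ne.symm hij] at this

theorem pairSum_ne_zero (hx : AlgebraicIndependent F x) (i : ι) : pairSum x i ≠ 0 := by
  classical
  intro h
  have hpoly : (X (i, 1) + X (i, -1) : MvPolynomial (ι × ℤˣ) F) = 0 :=
    hx (by simpa [pairSum] using h)
  simpa using congrArg (eval (Pi.single (i, 1) 1)) hpoly

theorem pairDiff_ne_zero (hx : AlgebraicIndependent F x) (i : ι) : pairDiff x i ≠ 0 :=
  sub_ne_zero.mpr (hx.injective.ne (by simp))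

theorem sum_pairDiff_sq_ne_zero [Fintype ι] [Nonempty ι] (hx : AlgebraicIndependent F x) :
    ∑ i, pairDiff x i ^ 2 ≠ 0 := by
  classical
  intro h
  have hpoly : ∑ i, (X (i, 1) - X (i, -1) : MvPolynomial (ι × ℤˣ) F) ^ 2 = 0 :=
    hx (by simpa [pairDiff] using h)
  have := congrArg (eval (Pi.single (Classical.arbitrary ι, 1) 1)) hpoly
  simp [Pi.single_apply, ite_pow] at this

end Nondegeneracy

end SignedPairs

section BalancedPermutations

open IntermediateField

variable {K : Type} [Field K] {I : Type}

/-- A permutation `g` of the indices `e (i, s)`, where `e` groups them into pairs `e (i, ±1)`, is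
balanced if it permutes the pairs, by `σ` say, and the number of pairs it swaps has the parity
of `σ`. -/
def IsBalanced {ι : Type*} [Fintype ι] [DecidableEq ι] (e : ι × ℤˣ → I) (g : Equiv.Perm I) :
    Prop :=
  ∃ (σ : Equiv.Perm ι) (ε : ι → ℤˣ), (∀ i s, g (e (i, s)) = e (σ i, ε i * s)) ∧
    ∏ i, ε i = Equiv.Perm.sign σ

variable (K) in
theorem IsBalanced.exists_permHom_Xvar {ι : Type*} [Fintype ι] [DecidableEq ι] {e : ι × ℤˣ → I}
    {g : Equiv.Perm I} (hg : IsBalanced e g) :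
    ∃ (σ : Equiv.Perm ι) (ε : ι → ℤˣ), (∀ i s, (permHom K I g : RFF K I →+* RFF K I)
      ((Xvar K I ∘ e) (i, s)) = (Xvar K I ∘ e) (σ i, ε i * s)) ∧
      ∏ i, ε i = Equiv.Perm.sign σ := by
  obtain ⟨σ, ε, hσ, hε⟩ := hg
  exact ⟨σ, ε, fun i s ↦ (permHom_Xvar g _).trans (congrArg _ (hσ i s)), hε⟩

theorem adjoin_range_Xvar_comp {F : Type*} [Field F] [Algebra K F] [Algebra F (RFF K I)]
    [IsScalarTower K F (RFF K I)] {J : Type*} {e : J → I} (he : Function.Surjective e) :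
    adjoin F (Set.range (Xvar K I ∘ e)) = ⊤ := by
  rw [he.range_comp]
  exact adjoin_eq_top_of_adjoin_eq_top K adjoin_range_Xvar

theorem isRatExt_fixedSub_of_isBalanced_of_two_ne_zero (h2 : (2 : K) ≠ 0)
    {e : Fin 4 × ℤˣ → I} (he : Function.Bijective e) {S : Set (Equiv.Perm I)}
    (hS : ∀ g ∈ S, IsBalanced e g) (hcard : 192 ≤ Nat.card (Subgroup.closure S)) :
    IsRatExt K (fixedSub K I (Subgroup.closure S)) := by
  have : Finite I := .of_surjective e he.2
  set x := Xvar K I ∘ e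
  have hx : AlgebraicIndependent K x := isTranscendenceBasis_Xvar.1.comp e he.1
  have hc := sum_pairDiff_sq_ne_zero hx
  have h2L : (2 : RFF K I) ≠ 0 := by
    simpa only [map_ofNat, map_zero] using (algebraMap K (RFF K I)).injective.ne h2
  refine isRatExt_fixedSub (t := kummerGenerators (pairSum x) (pairDiff x)) ?_ (fun j ↦ ?_)
    (le_trans ?_ (Nat.cast_le.mpr hcard))
  · simp [← Nat.card_congr (Equiv.ofBijective e he)]
  · refine mem_fixedSub_closure fun g hg ↦ ?_
    obtain ⟨σ, ε, hφ, hε⟩ := (hS g hg).exists_permHom_Xvar K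
    exact map_kummerGenerators (map_pairSum hφ) (map_pairDiff hφ) hε hc j
  · exact rank_le_of_kummerGenerators (pairSum_injective hx) (pairDiff_ne_zero hx) hc
      (fun j ↦ ⟨⟨_, subset_adjoin _ _ ⟨j, rfl⟩⟩, rfl⟩)
      (adjoin_pairSum_union_pairDiff h2L (adjoin_range_Xvar_comp he.2))

theorem isRatExt_fixedSub_of_isBalanced_of_charTwo [CharP K 2] {n : ℕ}
    {e : Fin (n + 1) × ℤˣ → I} (he : Function.Bijective e) {S : Set (Equiv.Perm I)}
    (hS : ∀ g ∈ S, IsBalanced e g)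
    (hcard : (n + 1).factorial * 2 ^ n ≤ Nat.card (Subgroup.closure S)) :
    IsRatExt K (fixedSub K I (Subgroup.closure S)) := by
  have : Finite I := .of_surjective e he.2
  set x := Xvar K I ∘ e
  have hx : AlgebraicIndependent K x := isTranscendenceBasis_Xvar.1.comp e he.1
  have hu := pairSum_injective hx
  have hu0 := pairSum_ne_zero hx
  have : CharP (RFF K I) 2 := charP_of_injective_algebraMap (algebraMap K (RFF K I)).injective 2
  refine isRatExt_fixedSub (t := artinSchreierGenerators (pairSum x) (pairRatio x)) ?_ (fun j ↦ ?_)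
    (le_trans ?_ (Nat.cast_le.mpr hcard))
  · rw [← Nat.card_congr (Equiv.ofBijective e he)]
    simpa using (by omega : n + 1 + (n + 1) ≤ (n + 1) * 2)
  · refine mem_fixedSub_closure fun g hg ↦ ?_
    obtain ⟨σ, ε, hφ, hε⟩ := (hS g hg).exists_permHom_Xvar K
    exact map_artinSchreierGenerators hu (map_pairSum hφ) (map_pairRatio hφ hu0) hε j
  · exact rank_le_of_artinSchreierGenerators hu (fun j ↦ ⟨⟨_, subset_adjoin _ _ ⟨j, rfl⟩⟩, rfl⟩)
      (adjoin_pairSum_union_pairRatio hu0 (adjoin_range_Xvar_comp he.2))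

end BalancedPermutations

section GroupOrder

theorem mul_card_inf_stabilizer_le_card {Γ α : Type*} [Group Γ] [MulAction Γ α] (H : Subgroup Γ)
    [Finite H] (a : α) {n : ℕ} {r : Fin n → Γ} (hr : ∀ k, r k ∈ H)
    (hinj : Function.Injective fun k ↦ r k • a) :
    n * Nat.card (H ⊓ MulAction.stabilizer Γ a : Subgroup Γ) ≤ Nat.card H := by
  have hcoset : Function.Injective fun p : Fin n × (H ⊓ MulAction.stabilizer Γ a : Subgroup Γ) ↦
      (⟨r p.1 * p.2, mul_mem (hr p.1) p.2.2.1⟩ : H) := by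
    rintro ⟨k, s⟩ ⟨l, t⟩ h
    have hmul : r k * s = r l * t := congrArg Subtype.val h
    obtain rfl : k = l := hinj <| by
      simpa [mul_smul, MulAction.mem_stabilizer_iff.mp s.2.2,
        MulAction.mem_stabilizer_iff.mp t.2.2] using congrArg (· • a) hmul
    exact Prod.ext rfl (Subtype.ext (mul_left_cancel hmul))
  simpa using Nat.card_le_card_of_injective _ hcoset

theorem range_vec_four {α : Type*} (a b c d : α) : Set.range ![a, b, c, d] = {a, b, c, d} := by
  simp only [Matrix.range_cons, Matrix.range_empty, Set.union_empty, Set.singleton_union]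

/-- The generators of `G₄₀`. -/
def g40Generator : Fin 4 → Equiv.Perm (Fin 8) :=
  ![Equiv.swap (0 : Fin 8) 4 * Equiv.swap 1 5,
    Equiv.swap (0 : Fin 8) 1 * Equiv.swap 2 3 * Equiv.swap 4 5 * Equiv.swap 6 7,
    (Equiv.swap (1 : Fin 8) 2 * Equiv.swap 2 3) * (Equiv.swap (5 : Fin 8) 6 * Equiv.swap 6 7),
    Equiv.swap (0 : Fin 8) 4 * Equiv.swap 2 3 * Equiv.swap 6 7]

/-- The element of `G₄₀` spelled by a word in its generators. -/
def g40Word (w : List (Fin 4)) : Equiv.Perm (Fin 8) := (w.map g40Generator).prod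

theorem g40Word_mem (w : List (Fin 4)) :
    g40Word w ∈ Subgroup.closure (Set.range g40Generator) := by
  refine list_prod_mem fun g hg ↦ ?_
  obtain ⟨k, -, rfl⟩ := List.mem_map.mp hg
  exact Subgroup.subset_closure ⟨k, rfl⟩

theorem le_card_closure_g40Generator :
    192 ≤ Nat.card (Subgroup.closure (Set.range g40Generator)) := by
  set G := Subgroup.closure (Set.range g40Generator)
  -- The orbits have lengths 8, 6 and 4: fixing a point also fixes its partner in the pair.
  let r₀ : Fin 8 → List (Fin 4) :=
    ![[], [1], [2, 1], [1, 2, 1], [0], [0, 1], [2, 0, 1], [1, 2, 0, 1]]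
  let r₁ : Fin 6 → List (Fin 4) := ![[], [2], [2, 2], [0, 3], [0, 2, 0], [3, 2, 0]]
  let r₂ : Fin 4 → List (Fin 4) := ![[], [2, 0, 3, 2], [2, 0, 2, 0, 2], [2, 2, 0, 2, 3]]
  have hr₁ : ∀ k, g40Word (r₁ k) 0 = 0 := by decide
  have hr₂ : ∀ k, g40Word (r₂ k) 0 = 0 ∧ g40Word (r₂ k) 1 = 1 := by decide
  have h₀ := mul_card_inf_stabilizer_le_card G (0 : Fin 8) (r := g40Word ∘ r₀)
    (fun _ ↦ g40Word_mem _) (by decide)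
  have h₁ := mul_card_inf_stabilizer_le_card (G ⊓ MulAction.stabilizer _ (0 : Fin 8)) (1 : Fin 8)
    (r := g40Word ∘ r₁) (fun k ↦ ⟨g40Word_mem _, hr₁ k⟩) (by decide)
  have h₂ := mul_card_inf_stabilizer_le_card (G ⊓ MulAction.stabilizer _ (0 : Fin 8) ⊓
    MulAction.stabilizer _ (1 : Fin 8)) (2 : Fin 8) (r := g40Word ∘ r₂)
    (fun k ↦ ⟨⟨g40Word_mem _, (hr₂ k).1⟩, (hr₂ k).2⟩) (by decide)
  have h₃ := Nat.card_pos (α := (G ⊓ MulAction.stabilizer _ (0 : Fin 8) ⊓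
    MulAction.stabilizer _ (1 : Fin 8) ⊓ MulAction.stabilizer _ (2 : Fin 8) : Subgroup _))
  omega

/-- The indices `i` and `i + 4` form the pair labelled `i`. -/
def halfIndex (p : Fin 4 × ℤˣ) : Fin 8 :=
  if p.2 = 1 then p.1.castAdd 4 else p.1.natAdd 4

theorem halfIndex_bijective : Function.Bijective halfIndex := by decide

theorem isBalanced_g40Generator (k : Fin 4) : IsBalanced halfIndex (g40Generator k) := by
  let σ : Fin 4 → Equiv.Perm (Fin 4) :=
    ![1, Equiv.swap 0 1 * Equiv.swap 2 3, Equiv.swap 1 2 * Equiv.swap 2 3, Equiv.swap 2 3]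
  let ε : Fin 4 → Fin 4 → ℤˣ := ![![-1, -1, 1, 1], 1, 1, ![-1, 1, 1, 1]]
  exact ⟨σ k, ε k, by revert k; decide, by revert k; decide⟩

end GroupOrder

/-- **Rationality for `G₄₀`.** For any field `K`, the subgroup `G₄₀ ⊆ S₈` of order 192 generated by `(1,5)(2,6)`, `σ₁ = (1,2)(3,4)(5,6)(7,8)`, `φ̃₁ = (2,3,4)(6,7,8)` and `(1,5)(3,4)(7,8)` has `K`-rational fixed field. -/
theorem rationality_G40 (K : Type) [Field K] :
    IsRatExt K ↥(fixedSub K (Fin 8) (Subgroup.closure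
      {Equiv.swap (0 : Fin 8) 4 * Equiv.swap 1 5,
       Equiv.swap (0 : Fin 8) 1 * Equiv.swap 2 3 * Equiv.swap 4 5 * Equiv.swap 6 7,
       (Equiv.swap (1 : Fin 8) 2 * Equiv.swap 2 3) * (Equiv.swap (5 : Fin 8) 6 * Equiv.swap 6 7),
       Equiv.swap (0 : Fin 8) 4 * Equiv.swap 2 3 * Equiv.swap 6 7})) := by
  rw [← range_vec_four]
  have hbal : ∀ g ∈ Set.range g40Generator, IsBalanced halfIndex g :=
    Set.forall_mem_range.mpr isBalanced_g40Generator
  by_cases h2 : (2 : K) = 0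
  · have : CharP K 2 := CharTwo.of_one_ne_zero_of_two_eq_zero one_ne_zero h2
    exact isRatExt_fixedSub_of_isBalanced_of_charTwo halfIndex_bijective hbal
      le_card_closure_g40Generator
  · exact isRatExt_fixedSub_of_isBalanced_of_two_ne_zero h2 halfIndex_bijective hbal
      le_card_closure_g40Generator
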